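/- arXiv:1307.7324 — 2 statements merged into one kernel-verified Lean document; each statement's English description precedes it below -/
import Mathlib

section
/- For every complex number q with |q| < 1, φ(q³)² = q²·φ(q)·a(q)·φ(q⁹)·a(q⁹) + φ(q)·b(q)·φ(q⁹)·b(q⁹). (This Ramanujan identity is equivalent to the branching rules for the level-1 E₆⁽¹⁾-modules V^{Λ₁} and V^{Λ₆} with respect to F₄⁽¹⁾, Theorem 3.7 of the paper.) -/
open scoped BigOperators

/-- The Euler function `φ(q) = ∏_{n=1}^∞ (1 - q^n)`. -/
noncomputable def eulerPhi (q : ℂ) : ℂ := ∏' n : ℕ, (1 - q ^ (n + 1))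

/-- The first Rogers–Ramanujan series
`a(q) = ∏_{n=1}^∞ 1/((1 - q^{5n-2})(1 - q^{5n-3}))`. -/
noncomputable def rrA (q : ℂ) : ℂ :=
  ∏' n : ℕ, ((1 - q ^ (5 * n + 3)) * (1 - q ^ (5 * n + 2)))⁻¹

/-- The second Rogers–Ramanujan series
`b(q) = ∏_{n=1}^∞ 1/((1 - q^{5n-1})(1 - q^{5n-4}))`. -/
noncomputable def rrB (q : ℂ) : ℂ :=
  ∏' n : ℕ, ((1 - q ^ (5 * n + 4)) * (1 - q ^ (5 * n + 1)))⁻¹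

/-- `G(q) = ∏_{n=1}^∞ (1-q^{15n})(1-q^{15n-7})(1-q^{15n-8})
          - q ∏_{n=1}^∞ (1-q^{15n})(1-q^{15n-13})(1-q^{15n-2})`. -/
noncomputable def Gf (q : ℂ) : ℂ :=
  (∏' n : ℕ, (1 - q ^ (15 * n + 15)) * (1 - q ^ (15 * n + 8)) * (1 - q ^ (15 * n + 7)))
  - q * ∏' n : ℕ, (1 - q ^ (15 * n + 15)) * (1 - q ^ (15 * n + 2)) * (1 - q ^ (15 * n + 13))

/-- `H(q) = ∏_{n=1}^∞ (1-q^{15n})(1-q^{15n-4})(1-q^{15n-11})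
          + q ∏_{n=1}^∞ (1-q^{15n})(1-q^{15n-14})(1-q^{15n-1})`. -/
noncomputable def Hf (q : ℂ) : ℂ :=
  (∏' n : ℕ, (1 - q ^ (15 * n + 15)) * (1 - q ^ (15 * n + 11)) * (1 - q ^ (15 * n + 4)))
  + q * ∏' n : ℕ, (1 - q ^ (15 * n + 15)) * (1 - q ^ (15 * n + 1)) * (1 - q ^ (15 * n + 14))


open Filter Topology

/-- partial products of the Euler function -/
noncomputable def qp (Q : ℂ) (N : ℕ) : ℂ := ∏ j ∈ Finset.range N, (1 - Q ^ (j + 1))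

/-- reciprocal of `qp`, extended by zero to negative integers -/
noncomputable def qe (Q : ℂ) (m : ℤ) : ℂ := if 0 ≤ m then (qp Q m.toNat)⁻¹ else 0

lemma one_sub_pow_ne {Q : ℂ} (hQ : ‖Q‖ < 1) (j : ℕ) (hj : j ≠ 0) : 1 - Q ^ j ≠ 0 := by
  intro h
  have h1 : Q ^ j = 1 := (sub_eq_zero.mp h).symm
  have h2 : ‖Q‖ ^ j = 1 := by rw [← norm_pow, h1, norm_one]
  have h3 : ‖Q‖ ^ j < 1 := pow_lt_one₀ (norm_nonneg _) hQ hj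
  linarith

lemma qp_ne {Q : ℂ} (hQ : ‖Q‖ < 1) (N : ℕ) : qp Q N ≠ 0 :=
  Finset.prod_ne_zero_iff.mpr fun j _ => one_sub_pow_ne hQ (j + 1) (by omega)

lemma summable_pow_lin {Q : ℂ} (hQ : ‖Q‖ < 1) (a b : ℕ) (ha : 0 < a) :
    Summable fun n : ℕ => ‖-Q ^ (a * n + b)‖ := by
  have : Summable fun n : ℕ => (‖Q‖ ^ a) ^ n * ‖Q‖ ^ b :=
    (summable_geometric_of_lt_one (by positivity) (pow_lt_one₀ (norm_nonneg _) hQ (by omega))).mul_right _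
  refine this.congr fun n => ?_
  rw [norm_neg, norm_pow, pow_add, pow_mul]

lemma mult_lin {Q : ℂ} (hQ : ‖Q‖ < 1) (a b : ℕ) (ha : 0 < a) :
    Multipliable fun n : ℕ => (1 - Q ^ (a * n + b)) := by
  simpa [sub_eq_add_neg] using multipliable_one_add_of_summable (summable_pow_lin hQ a b ha)

lemma tprod_lin_ne {Q : ℂ} (hQ : ‖Q‖ < 1) (a b : ℕ) (ha : 0 < a) (hb : 0 < b) :
    ∏' n : ℕ, (1 - Q ^ (a * n + b)) ≠ 0 := by
  have := tprod_one_add_ne_zero_of_summable (f := fun n : ℕ => -Q ^ (a * n + b))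
    (fun n => by
      have := one_sub_pow_ne hQ (a * n + b) (by omega)
      rwa [sub_eq_add_neg] at this) (summable_pow_lin hQ a b ha)
  simpa [sub_eq_add_neg] using this

lemma qp_tendsto {Q : ℂ} (hQ : ‖Q‖ < 1) : Tendsto (qp Q) atTop (𝓝 (eulerPhi Q)) := by
  have h := mult_lin hQ 1 1 one_pos
  simp only [one_mul] at h
  exact h.hasProd.tendsto_prod_nat

lemma eulerPhi_ne {Q : ℂ} (hQ : ‖Q‖ < 1) : eulerPhi Q ≠ 0 := by
  have := tprod_lin_ne hQ 1 1 one_pos one_pos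
  simpa [eulerPhi] using this

lemma qe_rec {Q : ℂ} (hQ : ‖Q‖ < 1) (m : ℤ) : qe Q (m - 1) = (1 - Q ^ m) * qe Q m := by
  rcases lt_trichotomy m 0 with h | h | h
  · simp [qe, show ¬ (0 ≤ m) by omega, show ¬ (1 ≤ m) by omega]
  · subst h; simp [qe]
  · obtain ⟨n, rfl⟩ : ∃ n : ℕ, m = n + 1 := ⟨(m - 1).toNat, by omega⟩
    have h1 : ((n : ℤ) + 1).toNat = n + 1 := by omega
    have h2 : qp Q (n + 1) = qp Q n * (1 - Q ^ (n + 1)) := Finset.prod_range_succ _ _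
    have h3 := one_sub_pow_ne hQ (n + 1) (by omega)
    have h4 := qp_ne hQ n
    simp only [qe, add_sub_cancel_right, Int.toNat_natCast, h1, h2]
    rw [if_pos (by omega), if_pos (by omega)]
    have h5 : Q ^ ((n : ℤ) + 1) = Q ^ (n + 1) := by exact_mod_cast zpow_natCast Q (n + 1)
    rw [h5]
    field_simp

/-- coefficients of the finite triple product -/
noncomputable def qc (Q : ℂ) (N : ℕ) (k : ℤ) : ℂ := qp Q (2 * N) * qe Q (N - k) * qe Q (N + k)

lemma qc_rec {Q : ℂ} (hQ : ‖Q‖ < 1) (h0 : Q ≠ 0) (N : ℕ) (k : ℤ) :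
    qc Q (N + 1) k = qc Q N k * (1 + Q ^ (2 * N + 1)) + Q ^ ((N : ℤ) + 1 - k) * qc Q N (k - 1)
      + Q ^ ((N : ℤ) + 1 + k) * qc Q N (k + 1) := by
  have e1 := qe_rec hQ ((N : ℤ) + 1 - k)
  have e2 := qe_rec hQ ((N : ℤ) + 1 + k)
  have e3 := qe_rec hQ ((N : ℤ) - k)
  have e4 := qe_rec hQ ((N : ℤ) + k)
  have hp : qp Q (2 * (N + 1)) = qp Q (2 * N) * (1 - Q ^ (2 * N + 1)) * (1 - Q ^ (2 * N + 2)) := by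
    rw [show 2 * (N + 1) = 2 * N + 1 + 1 by ring]
    simp only [qp, Finset.prod_range_succ]
  unfold qc
  rw [show ((N + 1 : ℕ) : ℤ) - k = (N : ℤ) + 1 - k by push_cast; ring,
    show ((N + 1 : ℕ) : ℤ) + k = (N : ℤ) + 1 + k by push_cast; ring,
    show (N : ℤ) - (k - 1) = N + 1 - k by ring, show (N : ℤ) + (k - 1) = N + k - 1 by ring,
    show (N : ℤ) - (k + 1) = N - k - 1 by ring, show (N : ℤ) + (k + 1) = N + 1 + k by ring,
    hp, e3, e4, show (N : ℤ) - k = N + 1 - k - 1 by ring, show (N : ℤ) + k = N + 1 + k - 1 by ring,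
    e1, e2]
  have hXY : Q ^ ((N : ℤ) + 1 - k) * Q ^ ((N : ℤ) + 1 + k) = Q ^ (2 * N + 2) := by
    rw [← zpow_add₀ h0, ← zpow_natCast]; congr 1; push_cast; ring
  have hW : Q ^ (2 * N + 1) = Q ^ ((N : ℤ) + 1 - k) * Q ^ ((N : ℤ) + 1 + k) / Q := by
    rw [hXY]; field_simp; ring
  rw [← hXY, hW, zpow_sub_one₀ h0, zpow_sub_one₀ h0]
  field_simp
  ring

/-- theta terms -/
noncomputable def tw (Q a : ℂ) (k : ℤ) : ℂ := (-1) ^ k * Q ^ (k * (k - 1) / 2) * a ^ k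

lemma tw_succ {Q a : ℂ} (h0 : Q ≠ 0) (ha : a ≠ 0) (k : ℤ) :
    tw Q a (k + 1) = - a * Q ^ k * tw Q a k := by
  have : (k + 1) * (k + 1 - 1) / 2 = k * (k - 1) / 2 + k := by
    rw [show (k + 1) * (k + 1 - 1) = k * (k - 1) + k * 2 by ring, Int.add_mul_ediv_right _ _ (by norm_num)]
  unfold tw
  rw [this, zpow_add₀ h0, zpow_add_one₀ ha, zpow_add_one₀ (by norm_num)]
  ring

lemma HasSum.congr_fun' {f g : ℤ → ℂ} {a b : ℂ} (h : ∀ k, g k = f k) (hab : b = a)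
    (hf : HasSum f a) : HasSum g b := by
  rw [hab, funext h]; exact hf

lemma finite_jtp {Q a : ℂ} (hQ : ‖Q‖ < 1) (h0 : Q ≠ 0) (ha : a ≠ 0) (N : ℕ) :
    HasSum (fun k : ℤ => tw Q a k * qc Q N k)
      (∏ j ∈ Finset.range N, ((1 - a * Q ^ j) * (1 - Q ^ (j + 1) / a))) := by
  induction N with
  | zero =>
    have := hasSum_single (f := fun k : ℤ => tw Q a k * qc Q 0 k) 0 (by
      intro k hk
      simp only [qc, qe]
      rcases lt_or_gt_of_ne hk with h | h
      · simp [show ¬ (0 ≤ k) by omega]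
      · simp [show ¬ (k ≤ 0) by omega])
    simpa [tw, qc, qe, qp] using this
  | succ N ih =>
    rw [Finset.prod_range_succ]
    have s1 := ((Equiv.subRight (1 : ℤ)).hasSum_iff).mpr ih
    have s2 := ((Equiv.addRight (1 : ℤ)).hasSum_iff).mpr ih
    have := ((ih.mul_right (1 + Q ^ (2 * N + 1))).add (s1.mul_right (- a * Q ^ N))).add
      (s2.mul_right (- Q ^ (N + 1) / a))
    refine (HasSum.congr_fun' ?_ ?_ this)
    · intro k
      simp only [Function.comp_apply, Equiv.subRight_apply, Equiv.coe_addRight]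
      rw [qc_rec hQ h0, tw_succ h0 ha]
      have := tw_succ h0 ha (k - 1)
      rw [sub_add_cancel] at this
      rw [this]
      have z1 : Q ^ ((N : ℤ) + 1 - k) * Q ^ (k - 1) = Q ^ N := by
        rw [← zpow_add₀ h0, ← zpow_natCast]; congr 1; ring
      have z2 : Q ^ ((N : ℤ) + 1 + k) = Q ^ (N + 1) * Q ^ k := by
        rw [zpow_add₀ h0]; congr 1
      rw [z2, ← z1]
      field_simp
      ring
    · field_simp
      ring

lemma qe_bdd {Q : ℂ} (hQ : ‖Q‖ < 1) : ∃ C : ℝ, 0 ≤ C ∧ ∀ m, ‖qe Q m‖ ≤ C := by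
  have := ((qp_tendsto hQ).inv₀ (eulerPhi_ne hQ)).norm.bddAbove_range
  obtain ⟨C, hC⟩ := this
  have h : ∀ n, ‖(qp Q n)⁻¹‖ ≤ C := fun n => hC ⟨n, rfl⟩
  refine ⟨C, (norm_nonneg _).trans (h 0), fun m => ?_⟩
  unfold qe
  split_ifs
  · exact h _
  · simpa using (norm_nonneg _).trans (h 0)

lemma qe_tendsto {Q : ℂ} (hQ : ‖Q‖ < 1) : Tendsto (qe Q) atTop (𝓝 (eulerPhi Q)⁻¹) := by
  have h1 := ((qp_tendsto hQ).inv₀ (eulerPhi_ne hQ))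
  have h2 : Tendsto Int.toNat atTop atTop := by
    refine tendsto_atTop.mpr fun b => ?_
    filter_upwards [eventually_ge_atTop (b : ℤ)] with m hm
    omega
  refine (h1.comp h2).congr' ?_
  filter_upwards [eventually_ge_atTop (0 : ℤ)] with m hm
  simp [qe, hm]

lemma jtp {Q a : ℂ} (hQ : ‖Q‖ < 1) (h0 : Q ≠ 0) (ha : a ≠ 0) (hs : Summable fun k => ‖tw Q a k‖) :
    Tendsto (fun N => ∏ j ∈ Finset.range N,
      ((1 - Q ^ (j + 1)) * ((1 - a * Q ^ j) * (1 - Q ^ (j + 1) / a)))) atTop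
      (𝓝 (∑' k, tw Q a k)) := by
  obtain ⟨C, hC0, hC⟩ := qe_bdd hQ
  obtain ⟨D, hD⟩ := (qp_tendsto hQ).norm.bddAbove_range
  have hD : ∀ n, ‖qp Q n‖ ≤ D := fun n => hD ⟨n, rfl⟩
  have hD0 := (norm_nonneg _).trans (hD 0)
  have key : Tendsto (fun N => ∑' k, tw Q a k * qc Q N k) atTop
      (𝓝 (∑' k, tw Q a k * (eulerPhi Q * (eulerPhi Q)⁻¹ * (eulerPhi Q)⁻¹))) := by
    refine tendsto_tsum_of_dominated_convergence (bound := fun k => ‖tw Q a k‖ * (D * C * C))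
      (hs.mul_right _) (fun k => ?_) (Eventually.of_forall fun N k => ?_)
    · refine Tendsto.const_mul _ ?_
      refine ((?_ : Tendsto _ _ _).mul ?_).mul ?_
      · exact (qp_tendsto hQ).comp (tendsto_id.const_mul_atTop' (by norm_num : 0 < 2))
      · refine (qe_tendsto hQ).comp ?_
        exact tendsto_atTop_add_const_right _ (-k) tendsto_natCast_atTop_atTop
      · refine (qe_tendsto hQ).comp ?_
        exact tendsto_atTop_add_const_right _ k tendsto_natCast_atTop_atTop
    · rw [norm_mul, qc, norm_mul, norm_mul]
      gcongr
      · exact hD _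
      · exact hC _
      · exact hC _
  have := (qp_tendsto hQ).mul key
  rw [tsum_mul_right] at this
  convert this using 2 with N
  · rw [(finite_jtp hQ h0 ha N).tsum_eq, Finset.prod_mul_distrib, qp]
  · have := eulerPhi_ne hQ
    field_simp

/-- theta series terms -/
noncomputable def th (s : ℂ) (n c : ℤ) (k : ℤ) : ℂ := (-1) ^ k * s ^ (k * (n * k + c))

lemma summable_natAbs {r : ℝ} (h0 : 0 ≤ r) (h1 : r < 1) : Summable fun k : ℤ => r ^ k.natAbs := by
  refine Summable.of_nat_of_neg ?_ ?_ <;>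
  simpa using summable_geometric_of_lt_one h0 h1

lemma norm_neg_one_zpow (k : ℤ) : ‖(-1 : ℂ) ^ k‖ = 1 := by simp [norm_zpow]

lemma zpow_le_natAbs {s : ℂ} (h0 : s ≠ 0) (hs : ‖s‖ < 1) (e k : ℤ) (h : (k.natAbs : ℤ) ≤ e) :
    ‖s ^ e‖ ≤ ‖s‖ ^ k.natAbs := by
  rw [norm_zpow, ← zpow_natCast]
  exact zpow_le_zpow_right_of_le_one₀ (norm_pos_iff.mpr h0) hs.le h

lemma th_summable {s : ℂ} (h0 : s ≠ 0) (hs : ‖s‖ < 1) (i l : ℤ) (hi : 0 < i) (hl : 0 < l) :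
    Summable fun k => ‖th s (i + l) (i - l) k‖ := by
  refine Summable.of_nonneg_of_le (fun _ => norm_nonneg _) (fun k => ?_)
    (summable_natAbs (norm_nonneg s) hs)
  rw [th, norm_mul, norm_neg_one_zpow, one_mul]
  refine zpow_le_natAbs h0 hs _ _ ?_
  have e : k * ((i + l) * k + (i - l)) = i * (k * (k + 1)) + l * (k * (k - 1)) := by ring
  have h1 : 0 ≤ k * (k + 1) := by
    rcases le_or_gt 0 k with h | h <;> nlinarith
  have h2 : 0 ≤ k * (k - 1) := by
    rcases lt_or_ge 0 k with h | h <;> nlinarith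
  have h3 : (k.natAbs : ℤ) ≤ 2 * k * k := by
    rw [Int.natCast_natAbs]
    rcases abs_cases k with ⟨h, h'⟩ | ⟨h, h'⟩ <;> rw [h] <;> nlinarith
  rw [e]
  nlinarith

lemma tw_eq_th {s : ℂ} (h0 : s ≠ 0) (i l : ℕ) (k : ℤ) :
    tw ((s ^ 2) ^ (i + l)) ((s ^ 2) ^ i) k = th s (i + l) (i - l) k := by
  have h2 : 2 * (k * (k - 1) / 2) = k * (k - 1) := by
    refine Int.mul_ediv_cancel' ?_
    have := Int.even_mul_pred_self k
    exact this.two_dvd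
  have e1 : ((s ^ 2) ^ (i + l)) ^ (k * (k - 1) / 2) = s ^ (((i : ℤ) + l) * (k * (k - 1))) := by
    rw [← zpow_natCast, ← zpow_natCast, ← zpow_mul, ← zpow_mul]
    congr 1; push_cast; linear_combination ((i : ℤ) + l) * h2
  have e2 : ((s ^ 2) ^ i) ^ k = s ^ (2 * (i : ℤ) * k) := by
    rw [← zpow_natCast, ← zpow_natCast, ← zpow_mul, ← zpow_mul]
    congr 1; push_cast; ring
  rw [tw, th, e1, e2, mul_assoc, ← zpow_add₀ h0]
  congr 2; ring

lemma norm_sq_lt {s : ℂ} (hs : ‖s‖ < 1) : ‖s ^ 2‖ < 1 := by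
  rw [norm_pow]; exact pow_lt_one₀ (norm_nonneg _) hs (by norm_num)

lemma jtp' {s : ℂ} (h0 : s ≠ 0) (hs : ‖s‖ < 1) (i l : ℕ) (hi : 0 < i) (hl : 0 < l) :
    Tendsto (fun N => ∏ j ∈ Finset.range N,
      ((1 - (s ^ 2) ^ ((i + l) * j + (i + l))) * ((1 - (s ^ 2) ^ ((i + l) * j + i)) *
        (1 - (s ^ 2) ^ ((i + l) * j + l))))) atTop
      (𝓝 (∑' k, th s (i + l) (i - l) k)) := by
  have hq := norm_sq_lt hs
  have hQ : ‖(s ^ 2) ^ (i + l)‖ < 1 := by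
    rw [norm_pow]; exact pow_lt_one₀ (norm_nonneg _) hq (by omega)
  have hss := th_summable h0 hs i l (by exact_mod_cast hi) (by exact_mod_cast hl)
  have := jtp hQ (by positivity) (a := (s ^ 2) ^ i) (by positivity)
    (by simpa only [tw_eq_th h0] using hss)
  simp only [tw_eq_th h0] at this
  refine this.congr fun N => Finset.prod_congr rfl fun j _ => ?_
  have e1 : ((s ^ 2) ^ (i + l)) ^ (j + 1) = (s ^ 2) ^ ((i + l) * j + (i + l)) := by
    rw [← pow_mul]; congr 1
  have e2 : (s ^ 2) ^ i * ((s ^ 2) ^ (i + l)) ^ j = (s ^ 2) ^ ((i + l) * j + i) := by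
    rw [← pow_mul (s ^ 2) (i + l) j, ← pow_add]; congr 1; ring
  have e3 : (s ^ 2) ^ ((i + l) * j + (i + l)) / (s ^ 2) ^ i = (s ^ 2) ^ ((i + l) * j + l) := by
    rw [div_eq_iff (by positivity), ← pow_add]; congr 1; ring
  rw [e1, e2, e3]

lemma qp_mul (q : ℂ) (n N : ℕ) : qp q (n * N) =
    ∏ j ∈ Finset.range N, ∏ r ∈ Finset.range n, (1 - q ^ (n * j + r + 1)) := by
  induction N with
  | zero => simp [qp]
  | succ N ih => rw [Finset.prod_range_succ, ← ih, Nat.mul_succ, qp, Finset.prod_range_add]; rfl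

lemma qp_tendsto_mul {q : ℂ} (hq : ‖q‖ < 1) (n : ℕ) (hn : 0 < n) :
    Tendsto (fun N => qp q (n * N)) atTop (𝓝 (eulerPhi q)) :=
  (qp_tendsto hq).comp (tendsto_id.const_mul_atTop' hn)

lemma phi_sum {s : ℂ} (h0 : s ≠ 0) (hs : ‖s‖ < 1) : eulerPhi (s ^ 2) = ∑' k, th s 3 1 k := by
  have h1 := qp_tendsto_mul (norm_sq_lt hs) 3 (by norm_num)
  have h2 := jtp' h0 hs 2 1 (by norm_num) (by norm_num)
  norm_num at h2
  refine tendsto_nhds_unique h1 (h2.congr fun N => ?_)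
  rw [qp_mul]
  refine Finset.prod_congr rfl fun j _ => ?_
  simp only [Finset.prod_range_succ, Finset.prod_range_zero]
  ring

lemma inv_prod_tendsto {q : ℂ} (hq : ‖q‖ < 1) (b c : ℕ) (hb : 0 < b) (hc : 0 < c) :
    Tendsto (fun N => ∏ n ∈ Finset.range N, ((1 - q ^ (5 * n + b)) * (1 - q ^ (5 * n + c)))⁻¹) atTop
      (𝓝 (∏' n : ℕ, ((1 - q ^ (5 * n + b)) * (1 - q ^ (5 * n + c)))⁻¹)) := by
  have m1 := (mult_lin hq 5 b (by norm_num)).hasProd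
  have m2 := (mult_lin hq 5 c (by norm_num)).hasProd
  have m3 := m1.mul m2
  have hne := mul_ne_zero (tprod_lin_ne hq 5 b (by norm_num) hb) (tprod_lin_ne hq 5 c (by norm_num) hc)
  have m4 : HasProd (fun n : ℕ => ((1 - q ^ (5 * n + b)) * (1 - q ^ (5 * n + c)))⁻¹)
      ((∏' n : ℕ, (1 - q ^ (5 * n + b))) * ∏' n : ℕ, (1 - q ^ (5 * n + c)))⁻¹ := by
    have := Tendsto.inv₀ m3 hne
    simp only [← Finset.prod_inv_distrib] at this
    exact this
  exact m4.multipliable.hasProd.tendsto_prod_nat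

lemma phiB_sum {s : ℂ} (h0 : s ≠ 0) (hs : ‖s‖ < 1) :
    eulerPhi (s ^ 2) * rrB (s ^ 2) = ∑' k, th s 5 1 k := by
  have hq := norm_sq_lt hs
  have h1 := (qp_tendsto_mul hq 5 (by norm_num)).mul
    (inv_prod_tendsto hq 4 1 (by norm_num) (by norm_num))
  have h2 := jtp' h0 hs 3 2 (by norm_num) (by norm_num)
  norm_num at h2
  refine tendsto_nhds_unique h1 (h2.congr fun N => ?_)
  rw [qp_mul, ← Finset.prod_mul_distrib]
  refine Finset.prod_congr rfl fun j _ => ?_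
  have n1 := one_sub_pow_ne hq (5 * j + 4) (by omega)
  have n2 := one_sub_pow_ne hq (5 * j + 1) (by omega)
  simp only [Finset.prod_range_succ, Finset.prod_range_zero]
  simp only [add_assoc, Nat.reduceAdd]
  generalize s ^ 2 = q at *
  field_simp

lemma phiA_sum {s : ℂ} (h0 : s ≠ 0) (hs : ‖s‖ < 1) :
    eulerPhi (s ^ 2) * rrA (s ^ 2) = ∑' k, th s 5 3 k := by
  have hq := norm_sq_lt hs
  have h1 := (qp_tendsto_mul hq 5 (by norm_num)).mul
    (inv_prod_tendsto hq 3 2 (by norm_num) (by norm_num))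
  have h2 := jtp' h0 hs 4 1 (by norm_num) (by norm_num)
  norm_num at h2
  refine tendsto_nhds_unique h1 (h2.congr fun N => ?_)
  rw [qp_mul, ← Finset.prod_mul_distrib]
  refine Finset.prod_congr rfl fun j _ => ?_
  have n1 := one_sub_pow_ne hq (5 * j + 3) (by omega)
  have n2 := one_sub_pow_ne hq (5 * j + 2) (by omega)
  simp only [Finset.prod_range_succ, Finset.prod_range_zero]
  simp only [add_assoc, Nat.reduceAdd]
  generalize s ^ 2 = q at *
  field_simp

/-- the double series -/
noncomputable def dF (s : ℂ) (x : ℤ × ℤ) : ℂ :=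
  (-1) ^ x.2 * s ^ (2 * x.1 ^ 2 + 2 * x.1 + 18 * x.1 * x.2 + 45 * x.2 ^ 2 + 9 * x.2)

lemma dF_summable {s : ℂ} (h0 : s ≠ 0) (hs : ‖s‖ < 1) : Summable (dF s) := by
  have hr := norm_pos_iff.mpr h0
  have hS := summable_natAbs (norm_nonneg s) hs
  have h2 : Summable fun x : ℤ × ℤ => ‖s‖ ^ (-10 : ℤ) * (‖s‖ ^ x.1.natAbs * ‖s‖ ^ x.2.natAbs) :=
    (hS.mul_of_nonneg hS (fun _ => by positivity) (fun _ => by positivity)).mul_left _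
  refine Summable.of_norm_bounded h2 fun ⟨t, k⟩ => ?_
  rw [dF, norm_mul, norm_neg_one_zpow, one_mul, norm_zpow, ← zpow_natCast, ← zpow_natCast,
    ← zpow_add₀ hr.ne', ← zpow_add₀ hr.ne']
  refine zpow_le_zpow_right_of_le_one₀ hr hs.le ?_
  simp only [Int.natCast_natAbs]
  rcases abs_cases t with ⟨h, h'⟩ | ⟨h, h'⟩ <;> rcases abs_cases k with ⟨g, g'⟩ | ⟨g, g'⟩ <;>
    rw [h, g] <;>
    nlinarith [sq_nonneg (4 * t + 18 * k + 1), sq_nonneg (4 * t + 18 * k + 3), sq_nonneg (k - 1),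
      sq_nonneg (k + 1), sq_nonneg k]

lemma split_tsum {F : ℤ × ℤ → ℂ} (hF : Summable F) (n : ℕ) [NeZero n] :
    ∑' x, F x = ∑ r : Fin n, ∑' x : ℤ × ℤ, F (n * x.1 + (r : ℕ), x.2) := by
  let e : Fin n × (ℤ × ℤ) ≃ ℤ × ℤ :=
    (Equiv.prodAssoc _ _ _).symm.trans
      (((Equiv.prodComm _ _).trans (Int.divModEquiv n).symm).prodCongr (Equiv.refl ℤ))
  have he : ∀ r x, e (r, x) = (n * x.1 + (r : ℕ), x.2) := by
    rintro r ⟨p, k⟩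
    simp [e, Int.divModEquiv, mul_comm]
  rw [← e.tsum_eq F, (e.summable_iff.mpr hF).tsum_prod (f := fun y => F (e y)), tsum_fintype]
  simp only [he]

lemma tsum_reindex {F G : ℤ × ℤ → ℂ} (f g : ℤ × ℤ → ℤ × ℤ) (h1 : ∀ x, g (f x) = x)
    (h2 : ∀ x, f (g x) = x) (h : ∀ x, F x = G (f x)) : ∑' x, F x = ∑' x, G x := by
  rw [funext h]
  exact (Equiv.mk f g h1 h2).tsum_eq G

lemma neg_one_zpow_neg (k : ℤ) : (-1 : ℂ) ^ (-k) = (-1) ^ k := by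
  rw [zpow_neg, ← inv_zpow]; norm_num

lemma sgn_eq {a b : ℤ} (h : Even (a - b)) : (-1 : ℂ) ^ a = (-1) ^ b := by
  rw [show a = b + (a - b) by ring, zpow_add₀ (by norm_num), h.neg_one_zpow, mul_one]

lemma sgn_ne {a b : ℤ} (h : Odd (a - b)) : (-1 : ℂ) ^ a = -(-1) ^ b := by
  rw [show a = b + (a - b) by ring, zpow_add₀ (by norm_num), h.neg_one_zpow, mul_neg, mul_one]

lemma th_mul {s : ℂ} (h0 : s ≠ 0) (α β n c : ℤ) (m k : ℤ) :
    th (s ^ α) n c m * th (s ^ β) n c k =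
      (-1) ^ (m + k) * s ^ (α * (m * (n * m + c)) + β * (k * (n * k + c))) := by
  rw [th, th, zpow_add₀ h0, zpow_mul s α, zpow_mul s β, zpow_add₀ (a := (-1 : ℂ)) (by norm_num)]
  ring

lemma main_sum {s : ℂ} (h0 : s ≠ 0) (hs : ‖s‖ < 1) :
    ∑' x : ℤ × ℤ, th (s ^ (3 : ℤ)) 3 1 x.1 * th (s ^ (3 : ℤ)) 3 1 x.2 =
      s ^ (4 : ℤ) * (∑' x : ℤ × ℤ, th (s ^ (1 : ℤ)) 5 3 x.1 * th (s ^ (9 : ℤ)) 5 3 x.2)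
      + ∑' x : ℤ × ℤ, th (s ^ (1 : ℤ)) 5 1 x.1 * th (s ^ (9 : ℤ)) 5 1 x.2 := by
  have hF := dF_summable h0 hs
  have h5 := split_tsum hF 5
  have h3 := split_tsum hF 3
  simp only [Fin.sum_univ_succ, Fin.sum_univ_zero] at h5 h3
  simp at h5 h3
  have a2 : ∑' x : ℤ × ℤ, dF s (5 * x.1 + 2, x.2) = 0 := by
    have : ∑' x : ℤ × ℤ, dF s (5 * x.1 + 2, x.2) = ∑' x : ℤ × ℤ, -dF s (5 * x.1 + 2, x.2) := by
      refine tsum_reindex (fun x => (x.1, -2 * x.1 - 1 - x.2)) (fun x => (x.1, -2 * x.1 - 1 - x.2))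
        (fun x => by ext <;> simp) (fun x => by ext <;> simp) fun ⟨p, k⟩ => ?_
      simp only [dF]
      rw [sgn_ne (a := k) (b := -2 * p - 1 - k) ⟨k + p, by ring⟩, neg_mul]
      congr 3; ring
    rw [tsum_neg] at this
    linear_combination this / 2
  have a3 : ∑' x : ℤ × ℤ, dF s (5 * x.1 + 3, x.2) = ∑' x : ℤ × ℤ, dF s (5 * x.1 + 1, x.2) := by
    refine tsum_reindex (fun x => (-x.1 - 1, -x.2)) (fun x => (-x.1 - 1, -x.2))
        (fun x => by ext <;> simp) (fun x => by ext <;> simp) fun ⟨p, k⟩ => ?_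
    simp only [dF]
    rw [neg_one_zpow_neg]
    congr 2; ring
  have a4 : ∑' x : ℤ × ℤ, dF s (5 * x.1 + 4, x.2) = ∑' x : ℤ × ℤ, dF s (5 * x.1, x.2) := by
    refine tsum_reindex (fun x => (-x.1 - 1, -x.2)) (fun x => (-x.1 - 1, -x.2))
        (fun x => by ext <;> simp) (fun x => by ext <;> simp) fun ⟨p, k⟩ => ?_
    simp only [dF]
    rw [neg_one_zpow_neg]
    congr 2; ring
  have b2 : ∑' x : ℤ × ℤ, dF s (3 * x.1 + 2, x.2) = ∑' x : ℤ × ℤ, dF s (3 * x.1, x.2) := by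
    refine tsum_reindex (fun x => (-x.1 - 1, -x.2)) (fun x => (-x.1 - 1, -x.2))
        (fun x => by ext <;> simp) (fun x => by ext <;> simp) fun ⟨p, k⟩ => ?_
    simp only [dF]
    rw [neg_one_zpow_neg]
    congr 2; ring
  have b1 : ∑' x : ℤ × ℤ, dF s (3 * x.1 + 1, x.2) = 0 := by
    have : ∑' x : ℤ × ℤ, dF s (3 * x.1 + 1, x.2) = ∑' x : ℤ × ℤ, -dF s (3 * x.1 + 1, x.2) := by
      refine tsum_reindex (fun x => (3 * x.1 + 1 + 5 * x.2, -2 * x.1 - 1 - 3 * x.2))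
        (fun x => (-3 * x.1 - 2 - 5 * x.2, 2 * x.1 + 1 + 3 * x.2))
        (fun x => by ext <;> simp <;> ring) (fun x => by ext <;> simp <;> ring) fun ⟨p, k⟩ => ?_
      simp only [dF]
      rw [sgn_ne (a := k) (b := -2 * p - 1 - 3 * k) ⟨2 * k + p, by ring⟩, neg_mul]
      congr 3; ring
    rw [tsum_neg] at this
    linear_combination this / 2
  have c0 : ∑' x : ℤ × ℤ, th (s ^ (1 : ℤ)) 5 1 x.1 * th (s ^ (9 : ℤ)) 5 1 x.2
      = ∑' x : ℤ × ℤ, dF s (5 * x.1, x.2) := by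
    refine tsum_reindex (fun x => (x.1, x.2 - x.1)) (fun x => (x.1, x.2 + x.1))
        (fun x => by ext <;> simp) (fun x => by ext <;> simp) fun ⟨m, n⟩ => ?_
    rw [th_mul h0]
    simp only [dF]
    rw [sgn_eq (a := m + n) (b := n - m) ⟨m, by ring⟩]
    congr 2; ring
  have c1 : s ^ (4 : ℤ) * ∑' x : ℤ × ℤ, th (s ^ (1 : ℤ)) 5 3 x.1 * th (s ^ (9 : ℤ)) 5 3 x.2
      = ∑' x : ℤ × ℤ, dF s (5 * x.1 + 1, x.2) := by
    rw [← tsum_mul_left]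
    refine tsum_reindex (fun x => (x.1, x.2 - x.1)) (fun x => (x.1, x.2 + x.1))
        (fun x => by ext <;> simp) (fun x => by ext <;> simp) fun ⟨m, n⟩ => ?_
    rw [th_mul h0, mul_left_comm, ← zpow_add₀ h0]
    simp only [dF]
    rw [sgn_eq (a := m + n) (b := n - m) ⟨m, by ring⟩]
    congr 2; ring
  have c2 : ∑' x : ℤ × ℤ, th (s ^ (3 : ℤ)) 3 1 x.1 * th (s ^ (3 : ℤ)) 3 1 x.2
      = ∑' x : ℤ × ℤ, dF s (3 * x.1, x.2) := by
    refine tsum_reindex (fun x => (2 * x.2 - x.1, x.1 - x.2)) (fun x => (x.1 + 2 * x.2, x.1 + x.2))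
        (fun x => by ext <;> simp <;> ring) (fun x => by ext <;> simp <;> ring) fun ⟨m, n⟩ => ?_
    rw [th_mul h0]
    simp only [dF]
    rw [sgn_eq (a := m + n) (b := m - n) ⟨n, by ring⟩]
    congr 2; ring
  rw [c0, c1, c2]
  rw [h5] at h3
  rw [a2, a3, a4, b1, b2] at h3
  linear_combination - h3 / 2

theorem branching_V_Lambda1_Lambda6 (q : ℂ) (hq : ‖q‖ < 1) :
    eulerPhi (q ^ 3) ^ 2 =
      q ^ 2 * eulerPhi q * rrA q * eulerPhi (q ^ 9) * rrA (q ^ 9)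
      + eulerPhi q * rrB q * eulerPhi (q ^ 9) * rrB (q ^ 9) := by
  by_cases hq0 : q = 0
  · subst hq0
    simp [eulerPhi, rrB]
  obtain ⟨s, rfl⟩ : ∃ s : ℂ, q = s ^ 2 := by
    obtain ⟨s, hs⟩ := IsAlgClosed.exists_pow_nat_eq q zero_lt_two
    exact ⟨s, hs.symm⟩
  have h0 : s ≠ 0 := by rintro rfl; simp at hq0
  have hs : ‖s‖ < 1 := by
    rw [norm_pow] at hq
    by_contra h
    have := one_le_pow₀ (not_lt.mp h) (n := 2)
    linarith
  have hp : ∀ n : ℕ, n ≠ 0 → ‖s ^ n‖ < 1 := fun n hn => by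
    rw [norm_pow]; exact pow_lt_one₀ (norm_nonneg _) hs hn
  have p3 := phi_sum (pow_ne_zero 3 h0) (hp 3 (by norm_num))
  have A1 := phiA_sum h0 hs
  have B1 := phiB_sum h0 hs
  have A9 := phiA_sum (pow_ne_zero 9 h0) (hp 9 (by norm_num))
  have B9 := phiB_sum (pow_ne_zero 9 h0) (hp 9 (by norm_num))
  rw [pow_right_comm] at p3 A9 B9
  have key := main_sum h0 hs
  have e1 : s ^ (1 : ℤ) = s := zpow_one s
  have e3 : s ^ (3 : ℤ) = s ^ 3 := zpow_natCast s 3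
  have e9 : s ^ (9 : ℤ) = s ^ 9 := zpow_natCast s 9
  have e4 : s ^ (4 : ℤ) = s ^ 4 := zpow_natCast s 4
  have S3 := th_summable (pow_ne_zero 3 h0) (hp 3 (by norm_num)) 2 1 (by norm_num) (by norm_num)
  have S1A := th_summable h0 hs 4 1 (by norm_num) (by norm_num)
  have S1B := th_summable h0 hs 3 2 (by norm_num) (by norm_num)
  have S9A := th_summable (pow_ne_zero 9 h0) (hp 9 (by norm_num)) 4 1 (by norm_num) (by norm_num)
  have S9B := th_summable (pow_ne_zero 9 h0) (hp 9 (by norm_num)) 3 2 (by norm_num) (by norm_num)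
  norm_num only at S3 S1A S1B S9A S9B
  rw [e1, e3, e9, e4, ← tsum_mul_tsum_of_summable_norm S3 S3,
    ← tsum_mul_tsum_of_summable_norm S1A S9A, ← tsum_mul_tsum_of_summable_norm S1B S9B,
    ← p3, ← A1, ← A9, ← B1, ← B9] at key
  linear_combination key
end

section
/- For every complex number q with |q| < 1, ∑_{k∈ℤ} q^{30k²}(q^{3k} − q^{27k+6}) = φ(q³)·b(q³). (Equation (2.20): the shifted Virasoro character φ(q)q^{−1/30}χ^{2,3}_{5,6}(q) equals φ(q³)b(q³).) -/
open scoped BigOperators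

open Filter Topology

namespace VirAux

/-- finite q-Pochhammer -/
noncomputable def P (Q : ℂ) (n : ℕ) : ℂ := ∏ i ∈ Finset.range n, (1 - Q ^ (i + 1))

/-- reciprocal of the Pochhammer symbol, zero at negative integers -/
noncomputable def R (Q : ℂ) (n : ℤ) : ℂ := if n < 0 then 0 else (P Q n.toNat)⁻¹

lemma one_sub_ne {Q : ℂ} (hQ : ‖Q‖ < 1) {n : ℕ} (hn : n ≠ 0) : 1 - Q ^ n ≠ 0 := by
  intro h
  have h1 : Q ^ n = 1 := (sub_eq_zero.mp h).symm
  have h2 : ‖Q‖ ^ n = 1 := by rw [← norm_pow, h1, norm_one]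
  have := pow_lt_one₀ (norm_nonneg Q) hQ hn
  linarith

lemma P_ne {Q : ℂ} (hQ : ‖Q‖ < 1) (n : ℕ) : P Q n ≠ 0 :=
  Finset.prod_ne_zero_iff.mpr fun i _ => one_sub_ne hQ (Nat.succ_ne_zero i)

lemma R_rec {Q : ℂ} (hQ : ‖Q‖ < 1) (n : ℤ) : R Q (n - 1) = (1 - Q ^ n) * R Q n := by
  rcases lt_trichotomy n 0 with h | h | h
  · simp [R, h, show n - 1 < 0 by omega]
  · subst h; simp [R]
  · obtain ⟨k, rfl⟩ : ∃ k : ℕ, n = k + 1 := ⟨(n - 1).toNat, by omega⟩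
    have h1 : ¬ ((k : ℤ) < 0) := by omega
    have h2 : ¬ ((k : ℤ) + 1 < 0) := by omega
    have h3 : ((k : ℤ) + 1).toNat = k + 1 := by omega
    have h4 : P Q (k + 1) = P Q k * (1 - Q ^ (k + 1)) := by
      simp [P, Finset.prod_range_succ]
    have h5 := P_ne hQ k
    have h6 := one_sub_ne hQ (Nat.succ_ne_zero k)
    have h7 : Q ^ ((k : ℤ) + 1) = Q ^ (k + 1) := by exact_mod_cast zpow_natCast Q (k + 1)
    simp only [R, add_sub_cancel_right, h1, h2, if_false, h3, h4, h7, Int.toNat_natCast]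
    field_simp

noncomputable def A (Q z : ℂ) (N : ℕ) : ℂ :=
  ∏ n ∈ Finset.range N, ((1 - z * Q ^ n) * (1 - Q ^ (n + 1) / z))

noncomputable def c (Q : ℂ) (T : ℤ → ℂ) (N : ℕ) (m : ℤ) : ℂ :=
  P Q (2 * N) * R Q (N + m) * R Q (N - m) * T m

lemma c_rec {Q z : ℂ} (hQ : ‖Q‖ < 1) (hQ0 : Q ≠ 0) (hz : z ≠ 0) {T : ℤ → ℂ}
    (hT : ∀ m, T (m + 1) = - z * Q ^ m * T m) (N : ℕ) (m : ℤ) :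
    c Q T (N + 1) m = (1 + Q ^ (2 * N + 1)) * c Q T N m - z * Q ^ N * c Q T N (m - 1)
      - Q ^ (N + 1) / z * c Q T N (m + 1) := by
  have a1 := R_rec hQ ((N : ℤ) + 1 + m)
  have a2 := R_rec hQ ((N : ℤ) + m)
  have b1 := R_rec hQ ((N : ℤ) + 1 - m)
  have b2 := R_rec hQ ((N : ℤ) - m)
  rw [show (N : ℤ) + 1 + m - 1 = N + m by ring] at a1
  rw [show (N : ℤ) + 1 - m - 1 = N - m by ring] at b1
  have hP : P Q (2 * (N + 1)) = P Q (2 * N) * (1 - Q ^ (2 * N + 1)) * (1 - Q ^ (2 * N + 2)) := by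
    simp [P, show 2 * (N + 1) = 2 * N + 1 + 1 by ring, Finset.prod_range_succ]
  have hT1 := hT (m - 1)
  rw [sub_add_cancel] at hT1
  have hu : Q ^ m ≠ 0 := zpow_ne_zero _ hQ0
  have hT2 : T (m - 1) = - (Q / (z * Q ^ m)) * T m := by
    rw [hT1, zpow_sub₀ hQ0, zpow_one]; field_simp
  have e1 : Q ^ ((N : ℤ) + 1 + m) = Q ^ N * Q * Q ^ m := by
    rw [zpow_add₀ hQ0, zpow_add₀ hQ0, zpow_one, zpow_natCast]
  have e2 : Q ^ ((N : ℤ) + m) = Q ^ N * Q ^ m := by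
    rw [zpow_add₀ hQ0, zpow_natCast]
  have e3 : Q ^ ((N : ℤ) + 1 - m) = Q ^ N * Q / Q ^ m := by
    rw [zpow_sub₀ hQ0, zpow_add₀ hQ0, zpow_one, zpow_natCast]
  have e4 : Q ^ ((N : ℤ) - m) = Q ^ N / Q ^ m := by
    rw [zpow_sub₀ hQ0, zpow_natCast]
  rw [e1] at a1; rw [e2] at a2; rw [e3] at b1; rw [e4] at b2
  simp only [c]
  rw [show (((N + 1 : ℕ) : ℤ)) + m = N + 1 + m by push_cast; ring,
    show (((N + 1 : ℕ) : ℤ)) - m = N + 1 - m by push_cast; ring,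
    show (N : ℤ) + (m - 1) = N + m - 1 by ring,
    show (N : ℤ) - (m - 1) = N + 1 - m by ring,
    show (N : ℤ) + (m + 1) = N + 1 + m by ring,
    show (N : ℤ) - (m + 1) = N - m - 1 by ring,
    a2, b2, a1, b1, hP, hT2, hT m]
  generalize R Q (N + 1 + m) = u
  generalize R Q (N + 1 - m) = v
  generalize P Q (2 * N) = p
  generalize T m = t
  rw [show Q ^ (2 * N + 1) = (Q ^ N) ^ 2 * Q by ring,
    show Q ^ (2 * N + 2) = (Q ^ N) ^ 2 * Q ^ 2 by ring, pow_succ Q N]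
  generalize Q ^ N = w
  generalize hy : Q ^ m = y at *
  field_simp
  ring

lemma c_hasSum {Q z : ℂ} (hQ : ‖Q‖ < 1) (hQ0 : Q ≠ 0) (hz : z ≠ 0) {T : ℤ → ℂ}
    (hT : ∀ m, T (m + 1) = - z * Q ^ m * T m) (hT0 : T 0 = 1) (N : ℕ) :
    HasSum (c Q T N) (A Q z N) := by
  induction N with
  | zero =>
    have : A Q z 0 = c Q T 0 0 := by simp [A, c, P, R, hT0]
    rw [this]
    apply hasSum_single
    intro m hm
    rcases lt_or_gt_of_ne hm with h | h
    · simp [c, R, h]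
    · simp [c, R, h]
  | succ N ih =>
    have h1 := (Equiv.subRight (1 : ℤ)).hasSum_iff.mpr ih
    have h2 := (Equiv.addRight (1 : ℤ)).hasSum_iff.mpr ih
    have h := ((ih.mul_left (1 + Q ^ (2 * N + 1))).sub (h1.mul_left (z * Q ^ N))).sub
      (h2.mul_left (Q ^ (N + 1) / z))
    have e1 : c Q T (N + 1) = fun b => (1 + Q ^ (2 * N + 1)) * c Q T N b
        - z * Q ^ N * (c Q T N ∘ (Equiv.subRight (1 : ℤ))) b
        - Q ^ (N + 1) / z * (c Q T N ∘ (Equiv.addRight (1 : ℤ))) b := by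
      funext m
      simpa using c_rec hQ hQ0 hz hT N m
    have e2 : A Q z (N + 1) = (1 + Q ^ (2 * N + 1)) * A Q z N - z * Q ^ N * A Q z N
        - Q ^ (N + 1) / z * A Q z N := by
      simp only [A, Finset.prod_range_succ]
      field_simp
      ring
    rw [e1, e2]
    exact h

lemma summ_pow {Q : ℂ} (hQ : ‖Q‖ < 1) (a b : ℕ) (ha : a ≠ 0) :
    Summable fun n : ℕ => ‖-(Q ^ (a * n + b))‖ := by
  have : (fun n : ℕ => ‖-(Q ^ (a * n + b))‖) = fun n => (‖Q‖ ^ a) ^ n * ‖Q‖ ^ b := by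
    funext n; rw [norm_neg, norm_pow, pow_add, pow_mul]
  rw [this]
  exact (summable_geometric_of_lt_one (by positivity)
    (pow_lt_one₀ (norm_nonneg Q) hQ ha)).mul_right _

lemma mult_pow {Q : ℂ} (hQ : ‖Q‖ < 1) (a b : ℕ) (ha : a ≠ 0) :
    Multipliable fun n : ℕ => (1 - Q ^ (a * n + b)) := by
  simpa [sub_eq_add_neg] using multipliable_one_add_of_summable (summ_pow hQ a b ha)

lemma tprod_ne {Q : ℂ} (hQ : ‖Q‖ < 1) (a b : ℕ) (ha : a ≠ 0) (hb : b ≠ 0) :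
    ∏' n : ℕ, (1 - Q ^ (a * n + b)) ≠ 0 := by
  have := tprod_one_add_ne_zero_of_summable (f := fun n : ℕ => -(Q ^ (a * n + b)))
    (fun n => by rw [← sub_eq_add_neg]; exact one_sub_ne hQ (by omega)) (summ_pow hQ a b ha)
  simpa [sub_eq_add_neg] using this

lemma P_tendsto {Q : ℂ} (hQ : ‖Q‖ < 1) :
    Tendsto (P Q) atTop (𝓝 (∏' n : ℕ, (1 - Q ^ (1 * n + 1)))) := by
  have := (mult_pow hQ 1 1 one_ne_zero).hasProd.tendsto_prod_nat
  have e : P Q = fun n => ∏ i ∈ Finset.range n, (1 - Q ^ (1 * i + 1)) := by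
    funext n; simp [P]
  rw [e]
  exact this

lemma R_tendsto {Q : ℂ} (hQ : ‖Q‖ < 1) :
    Tendsto (R Q) atTop (𝓝 (∏' n : ℕ, (1 - Q ^ (1 * n + 1)))⁻¹) := by
  have h1 : Tendsto (fun n : ℤ => n.toNat) atTop atTop := by
    refine tendsto_atTop.mpr fun b => ?_
    filter_upwards [eventually_ge_atTop (b : ℤ)] with n hn
    omega
  have h2 := ((P_tendsto hQ).inv₀ (tprod_ne hQ 1 1 one_ne_zero one_ne_zero)).comp h1
  refine h2.congr' ?_
  filter_upwards [eventually_ge_atTop 0] with n hn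
  simp [R, not_lt.mpr hn]

lemma R_bdd {Q : ℂ} (hQ : ‖Q‖ < 1) : ∃ C, 0 ≤ C ∧ ∀ n, ‖R Q n‖ ≤ C := by
  have h := Metric.isBounded_range_of_tendsto _
    ((P_tendsto hQ).inv₀ (tprod_ne hQ 1 1 one_ne_zero one_ne_zero))
  obtain ⟨C, hC0, hC⟩ := h.exists_pos_norm_le
  refine ⟨C, hC0.le, fun n => ?_⟩
  unfold R
  split_ifs
  · simpa using hC0.le
  · exact hC _ ⟨n.toNat, rfl⟩

lemma P_bdd {Q : ℂ} (hQ : ‖Q‖ < 1) : ∃ C, 0 ≤ C ∧ ∀ n, ‖P Q n‖ ≤ C := by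
  have h := Metric.isBounded_range_of_tendsto _ (P_tendsto hQ)
  obtain ⟨C, hC0, hC⟩ := h.exists_pos_norm_le
  exact ⟨C, hC0.le, fun n => hC _ ⟨n, rfl⟩⟩

/-- the limit of the finite triple product identity -/
lemma triple {Q z : ℂ} (hQ : ‖Q‖ < 1) (hQ0 : Q ≠ 0) (hz : z ≠ 0) {T : ℤ → ℂ}
    (hT : ∀ m, T (m + 1) = - z * Q ^ m * T m) (hT0 : T 0 = 1) (hs : Summable fun m => ‖T m‖) :
    Tendsto (fun N => P Q N * A Q z N) atTop (𝓝 (∑' m, T m)) := by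
  obtain ⟨C, hC0, hC⟩ := R_bdd hQ
  obtain ⟨D, hD0, hD⟩ := P_bdd hQ
  set p := ∏' n : ℕ, (1 - Q ^ (1 * n + 1)) with hp
  have hp0 : p ≠ 0 := tprod_ne hQ 1 1 one_ne_zero one_ne_zero
  have key : Tendsto (fun N : ℕ => ∑' m, c Q T N m) atTop (𝓝 (∑' m, p⁻¹ * T m)) := by
    refine tendsto_tsum_of_dominated_convergence (bound := fun m => D * C * C * ‖T m‖)
      (hs.mul_left _) ?_ ?_
    · intro m
      have t1 : Tendsto (fun N : ℕ => P Q (2 * N)) atTop (𝓝 p) :=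
        (P_tendsto hQ).comp (tendsto_id.const_mul_atTop' (by norm_num))
      have t2 : Tendsto (fun N : ℕ => R Q (N + m)) atTop (𝓝 p⁻¹) :=
        (R_tendsto hQ).comp (tendsto_atTop_add_const_right _ m tendsto_natCast_atTop_atTop)
      have t3 : Tendsto (fun N : ℕ => R Q (N - m)) atTop (𝓝 p⁻¹) :=
        (R_tendsto hQ).comp (tendsto_atTop_add_const_right _ (-m) tendsto_natCast_atTop_atTop)
      have := ((t1.mul t2).mul t3).mul_const (T m)
      rwa [mul_inv_cancel₀ hp0, one_mul] at this
    · refine Eventually.of_forall fun N m => ?_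
      simp only [c, norm_mul]
      gcongr
      · exact hD _
      · exact hC _
      · exact hC _
  have e : (fun N : ℕ => ∑' m, c Q T N m) = A Q z := by
    funext N; exact (c_hasSum hQ hQ0 hz hT hT0 N).tsum_eq
  rw [e, tsum_mul_left] at key
  have := (P_tendsto hQ).mul key
  rwa [← hp, mul_inv_cancel_left₀ hp0] at this

/-- pentagonal-like exponent -/
def ex (m : ℤ) : ℤ := m * (5 * m + 1) / 2

lemma two_ex (m : ℤ) : 2 * ex m = m * (5 * m + 1) := by
  unfold ex
  apply Int.mul_ediv_cancel'
  rcases Int.even_or_odd' m with ⟨k, rfl | rfl⟩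
  · exact ⟨k * (5 * (2 * k) + 1), by ring⟩
  · exact ⟨(2 * k + 1) * (5 * k + 3), by ring⟩

lemma ex_ge (m : ℤ) : (m.natAbs : ℤ) ≤ ex m := by
  have := two_ex m
  rw [Int.natCast_natAbs]
  have h2 : |m| ≤ m ^ 2 := by
    rcases eq_or_ne m 0 with rfl | h
    · simp
    · have := Int.one_le_abs h
      rw [← sq_abs]; nlinarith
  have := neg_abs_le m
  nlinarith

noncomputable def T (x : ℂ) (m : ℤ) : ℂ := (-1) ^ m * x ^ ex m

lemma T_rec {x : ℂ} (hx : x ≠ 0) (m : ℤ) : T x (m + 1) = - x ^ 3 * (x ^ 5) ^ m * T x m := by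
  have h : ex (m + 1) = 3 + 5 * m + ex m := by
    have h1 := two_ex m
    have h2 := two_ex (m + 1)
    linarith
  unfold T
  rw [h, zpow_add₀ hx, zpow_add₀ hx, zpow_add₀ (by norm_num : (-1 : ℂ) ≠ 0), zpow_mul,
    zpow_one, show x ^ (3 : ℤ) = x ^ 3 by norm_cast, show x ^ (5 : ℤ) = x ^ 5 by norm_cast]
  ring

lemma T_summable {x : ℂ} (hx : x ≠ 0) (h1 : ‖x‖ < 1) : Summable fun m => ‖T x m‖ := by
  have hb : Summable fun m : ℤ => ‖x‖ ^ m.natAbs := by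
    apply Summable.of_nat_of_neg <;> simpa using summable_geometric_of_lt_one (norm_nonneg x) h1
  refine Summable.of_nonneg_of_le (fun _ => norm_nonneg _) (fun m => ?_) hb
  unfold T
  rw [norm_mul, norm_zpow, norm_zpow, norm_neg, norm_one, one_zpow, one_mul,
    ← zpow_natCast ‖x‖]
  exact zpow_le_zpow_right_of_le_one₀ (norm_pos_iff.mpr hx) h1.le (ex_ge m)

lemma T_even (x : ℂ) (k : ℤ) : T x (2 * k) = x ^ (10 * k ^ 2 + k) := by
  have : ex (2 * k) = 10 * k ^ 2 + k := by
    have := two_ex (2 * k)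
    linarith
  simp [T, this, zpow_mul]

lemma T_odd (x : ℂ) (k : ℤ) : T x (2 * (-k - 1) + 1) = - x ^ (10 * k ^ 2 + 9 * k + 2) := by
  have : ex (2 * (-k - 1) + 1) = 10 * k ^ 2 + 9 * k + 2 := by
    have := two_ex (2 * (-k - 1) + 1)
    linarith
  rw [T, this, zpow_add₀ (by norm_num), zpow_mul]
  simp

lemma split_tsum {f : ℤ → ℂ} (hf : Summable f) :
    ∑' k : ℤ, (f (2 * k) + f (2 * (-k - 1) + 1)) = ∑' m, f m := by
  have i1 : Function.Injective (fun k : ℤ => 2 * k) := fun a b h => by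
    simp only at h; omega
  have i2 : Function.Injective (fun k : ℤ => 2 * (-k - 1) + 1) := fun a b h => by
    simp only at h; omega
  have hc : IsCompl (Set.range fun k : ℤ => 2 * k)
      (Set.range fun k : ℤ => 2 * (-k - 1) + 1) := by
    rw [← compl_eq_iff_isCompl]
    ext m
    simp only [Set.mem_compl_iff, Set.mem_range, not_exists]
    constructor
    · intro h
      have := h (m / 2)
      exact ⟨-(m / 2) - 1, by omega⟩
    · rintro ⟨k, rfl⟩ y
      omega
  have h1 := (hf.comp_injective i1).hasSum
  have h2 := (hf.comp_injective i2).hasSum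
  have := HasSum.add_isCompl hc (i1.hasSum_range_iff.mpr h1) (i2.hasSum_range_iff.mpr h2)
  rw [this.tsum_eq]
  exact (h1.add h2).tsum_eq

lemma P_five (x : ℂ) (N : ℕ) : P x (5 * N) =
    (∏ n ∈ Finset.range N, ((1 - x ^ (5 * n + 4)) * (1 - x ^ (5 * n + 1)))) *
    (P (x ^ 5) N * ∏ n ∈ Finset.range N, ((1 - x ^ (5 * n + 3)) * (1 - x ^ (5 * n + 2)))) := by
  induction N with
  | zero => simp [P]
  | succ N ih =>
    have h : P x (5 * (N + 1)) = P x (5 * N) * (1 - x ^ (5 * N + 1)) * (1 - x ^ (5 * N + 2))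
        * (1 - x ^ (5 * N + 3)) * (1 - x ^ (5 * N + 4)) * (1 - x ^ (5 * N + 5)) := by
      simp [P, show 5 * (N + 1) = 5 * N + 1 + 1 + 1 + 1 + 1 by ring, Finset.prod_range_succ]
    have h' : P (x ^ 5) (N + 1) = P (x ^ 5) N * (1 - x ^ (5 * N + 5)) := by
      simp only [P, Finset.prod_range_succ]
      rw [← pow_mul, show 5 * (N + 1) = 5 * N + 5 by ring]
    rw [h, ih, h', Finset.prod_range_succ, Finset.prod_range_succ]
    ring

lemma main {x : ℂ} (hx : x ≠ 0) (h1 : ‖x‖ < 1) :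
    ∑' m, T x m = eulerPhi x * rrB x := by
  have hQ : ‖x ^ 5‖ < 1 := by
    rw [norm_pow]; exact pow_lt_one₀ (norm_nonneg x) h1 (by norm_num)
  have l1 := triple hQ (pow_ne_zero 5 hx) (pow_ne_zero 3 hx) (T_rec hx) (by simp [T, ex])
    (T_summable hx h1)
  have hm := (mult_pow h1 5 4 (by norm_num)).mul (mult_pow h1 5 1 (by norm_num))
  have hne : ∏' n : ℕ, ((1 - x ^ (5 * n + 4)) * (1 - x ^ (5 * n + 1))) ≠ 0 := by
    rw [(mult_pow h1 5 4 (by norm_num)).tprod_mul (mult_pow h1 5 1 (by norm_num))]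
    exact mul_ne_zero (tprod_ne h1 5 4 (by norm_num) (by norm_num))
      (tprod_ne h1 5 1 (by norm_num) (by norm_num))
  have hB := (hm.inv₀ hne).hasProd.tendsto_prod_nat
  have hP : Tendsto (fun N : ℕ => P x (5 * N)) atTop (𝓝 (eulerPhi x)) := by
    have := (P_tendsto h1).comp
      (tendsto_id.const_mul_atTop' (by norm_num : 0 < 5) : Tendsto (fun N : ℕ => 5 * N) _ _)
    simpa [eulerPhi, Function.comp_def] using this
  refine tendsto_nhds_unique l1 ((hP.mul hB).congr fun N => ?_)
  have hA : A (x ^ 5) (x ^ 3) N =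
      ∏ n ∈ Finset.range N, ((1 - x ^ (5 * n + 3)) * (1 - x ^ (5 * n + 2))) := by
    refine Finset.prod_congr rfl fun n _ => ?_
    congr 2
    · ring
    · rw [div_eq_iff (pow_ne_zero 3 hx)]; ring
  have hpn : ∏ n ∈ Finset.range N, ((1 - x ^ (5 * n + 4)) * (1 - x ^ (5 * n + 1))) ≠ 0 :=
    Finset.prod_ne_zero_iff.mpr fun n _ =>
      mul_ne_zero (one_sub_ne h1 (by omega)) (one_sub_ne h1 (by omega))
  rw [P_five, hA, Finset.prod_inv_distrib, mul_right_comm, mul_inv_cancel₀ hpn, one_mul]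

end VirAux

theorem virasoro_char_23_eq_phi_b (q : ℂ) (hq : ‖q‖ < 1) :
    ∑' k : ℤ, q ^ (30 * k ^ 2) * (q ^ (3 * k) - q ^ (27 * k + 6)) =
      eulerPhi (q ^ 3) * rrB (q ^ 3) := by
  by_cases h0 : q = 0
  · subst h0
    have hL : ∑' k : ℤ, (0 : ℂ) ^ (30 * k ^ 2) * ((0 : ℂ) ^ (3 * k) - (0 : ℂ) ^ (27 * k + 6))
        = 1 := by
      rw [tsum_eq_single 0]
      · norm_num
      · intro k hk
        rw [zero_zpow _ (by positivity), zero_mul]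
    rw [hL]
    simp [eulerPhi, rrB]
  · have hx : q ^ 3 ≠ 0 := pow_ne_zero 3 h0
    have h1 : ‖q ^ 3‖ < 1 := by
      rw [norm_pow]; exact pow_lt_one₀ (norm_nonneg q) hq (by norm_num)
    rw [← VirAux.main hx h1, ← VirAux.split_tsum (VirAux.T_summable hx h1).of_norm]
    refine tsum_congr fun k => ?_
    rw [VirAux.T_even, VirAux.T_odd, ← sub_eq_add_neg, mul_sub, ← zpow_add₀ h0, ← zpow_add₀ h0,
      ← zpow_natCast q 3, ← zpow_mul, ← zpow_mul]
    congr 2 <;> push_cast <;> ring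
end
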